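/- Let p ≥ 5 be a prime, and for a positive integer n let V_p(n) denote the set of positive integers not exceeding n whose least prime divisor is p. Then lim_{n→∞} ln(−∑_{j ∈ V_p(n)} (−1)^{s(j)}) / ln n = ln 3 / ln 4. -/

import Mathlib

open Finset Filter Topology

noncomputable section

/-- `s n` is the number of 1's in the binary expansion of `n`. -/
def s (n : ℕ) : ℕ := (Nat.digits 2 n).count 1

/-- `S m x = ∑_{0 ≤ n < x, m ∣ n} (-1)^(s n)`. -/
def S (m x : ℕ) : ℝ := ∑ n ∈ Finset.range x, if m ∣ n then (-1 : ℝ) ^ (s n) else 0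

/-- `F α N = ∑_{n=0}^{N-1} e^{2πi(αn + s(n)/2)}`. -/
def F (α : ℝ) (N : ℕ) : ℂ :=
  ∑ n ∈ Finset.range N, Complex.exp (2 * Real.pi * Complex.I * ((α : ℂ) * n + (s n : ℂ) / 2))

/-- `bsq m = b_m ^ 2`, defined by cases on `m mod 3`. -/
def bsq (m : ℕ) : ℝ :=
  if m % 3 = 0 then
    Real.sin (Real.pi / 3 * (1 + 3 / m)) * (Real.sqrt 3 - Real.sin (Real.pi / 3 * (1 + 3 / m)))
  else if m % 3 = 1 then
    Real.sin (Real.pi / 3 * (1 - 1 / m)) * (Real.sqrt 3 - Real.sin (Real.pi / 3 * (1 - 1 / m)))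
  else
    Real.sin (Real.pi / 3 * (1 + 1 / m)) * (Real.sqrt 3 - Real.sin (Real.pi / 3 * (1 + 1 / m)))

/-- `b m` is the positive real number with `(b m)^2 = bsq m`. -/
def b (m : ℕ) : ℝ := Real.sqrt (bsq m)

/-- `lam m = λ_m = 1 + log₂ b_m`. -/
def lam (m : ℕ) : ℝ := 1 + Real.logb 2 (b m)

/-- `mu m = μ_m = (2 b_m + 1)/(2 b_m - 1)`. -/
def mu (m : ℕ) : ℝ := (2 * b m + 1) / (2 * b m - 1)

/-- `U m x`: positive integers `≤ x` divisible by `m` and not by 3. -/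
def U (m x : ℕ) : Finset ℕ := (Finset.Icc 1 x).filter (fun n => m ∣ n ∧ ¬ (3 ∣ n))

/-- `V p n`: positive integers `≤ n` whose least prime divisor is `p`. -/
def V (p n : ℕ) : Finset ℕ := (Finset.Icc 1 n).filter (fun j => Nat.minFac j = p)

/-! Writing `j = 2 * k + 1`, the quantity `-∑ j ∈ V p n, (-1) ^ s j` becomes the sum of the
Thue–Morse signs `(-1) ^ s k` against a periodic weight in `k`, the indicator of
`(2 * k + 1).minFac = p`. Its period `Q` is odd, it is invariant under `k ↦ -1 - k`, and it vanishes
for `k ≡ 1` modulo `3`.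

Expand the weight in powers of `Q`-th roots of unity. The Thue–Morse sum of `z ^ k` over a block of
length `2 ^ r` is `∏ i < r, (1 - z ^ 2 ^ i)`, and `v = ‖1 - z‖ ^ 2` evolves under `z ↦ z ^ 2` by the
logistic map `v ↦ v * (4 - v)`. Since `v ^ 3 * (4 - v) ≤ 27` with equality only at `v = 3`, the
product over a cycle of doubling is smaller than `√3 ^ r` unless `z` is a primitive cube root of
unity. All other frequencies therefore contribute `o(N ^ log₄ 3)`, while the symmetry forces the
cube-root part to be a positive multiple of a sum `W` with `W (4 * N) = 3 * W N`, which has exact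
order `N ^ log₄ 3`. -/

open Asymptotics

/-- The exponent `log 3 / log 4` governing Newman's sums. -/
def newmanExponent : ℝ := Real.log 3 / Real.log 4

lemma newmanExponent_pos : 0 < newmanExponent :=
  div_pos (Real.log_pos (by norm_num)) (Real.log_pos (by norm_num))

lemma four_rpow_newmanExponent : (4 : ℝ) ^ newmanExponent = 3 :=
  Real.rpow_logb (by norm_num) (by norm_num) (by norm_num)

lemma two_pow_rpow_newmanExponent_sq (r : ℕ) :
    (((2 ^ r : ℕ) : ℝ) ^ newmanExponent) ^ 2 = 3 ^ r := by
  have hbase : (((2 ^ r : ℕ) : ℝ)) ^ 2 = 4 ^ r := by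
    push_cast
    rw [← pow_mul, mul_comm, pow_mul]
    norm_num
  rw [Real.rpow_pow_comm (by positivity), hbase, ← Real.rpow_pow_comm (by norm_num),
    four_rpow_newmanExponent]

/-- The Thue–Morse sequence with values `±1`. -/
def thueMorse (n : ℕ) : ℤ := (-1) ^ s n

lemma s_two_mul (n : ℕ) : s (2 * n) = s n := by
  rcases n.eq_zero_or_pos with rfl | hn
  · rfl
  · have := Nat.digits_add 2 (by norm_num) 0 n (by norm_num) (Or.inr hn.ne')
    rw [zero_add] at this
    simp [s, this]

lemma s_two_mul_add_one (n : ℕ) : s (2 * n + 1) = s n + 1 := by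
  have := Nat.digits_add 2 (by norm_num) 1 n (by norm_num) (Or.inl one_ne_zero)
  rw [add_comm] at this
  rw [s, s, this, List.count_cons_self]

lemma thueMorse_two_mul (n : ℕ) : thueMorse (2 * n) = thueMorse n := by
  rw [thueMorse, s_two_mul, thueMorse]

lemma thueMorse_two_mul_add_one (n : ℕ) : thueMorse (2 * n + 1) = -thueMorse n := by
  rw [thueMorse, s_two_mul_add_one, thueMorse, pow_succ, mul_neg_one]

/-- The partial sums `∑_{j < N} (-1) ^ s j • a j` of a sequence twisted by the Thue–Morse signs. -/
def thueMorseSum {M : Type*} [AddCommGroup M] (a : ℕ → M) (N : ℕ) : M :=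
  ∑ j ∈ range N, thueMorse j • a j

section AddCommGroup

variable {M M' : Type*} [AddCommGroup M] [AddCommGroup M']

lemma map_thueMorseSum (φ : M →+ M') (a : ℕ → M) (N : ℕ) :
    φ (thueMorseSum a N) = thueMorseSum (fun j => φ (a j)) N := by
  simp only [thueMorseSum, map_sum, map_zsmul]

lemma thueMorseSum_sub (a b : ℕ → M) (N : ℕ) :
    thueMorseSum (fun j => a j - b j) N = thueMorseSum a N - thueMorseSum b N := by
  simp only [thueMorseSum, smul_sub, sum_sub_distrib]

lemma thueMorseSum_sum {ι : Type*} (t : Finset ι) (a : ι → ℕ → M) (N : ℕ) :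
    thueMorseSum (fun j => ∑ i ∈ t, a i j) N = ∑ i ∈ t, thueMorseSum (a i) N := by
  simp only [thueMorseSum, smul_sum]
  exact sum_comm

lemma thueMorseSum_two_mul (a : ℕ → M) (N : ℕ) :
    thueMorseSum a (2 * N) = thueMorseSum (fun j => a (2 * j) - a (2 * j + 1)) N := by
  induction N with
  | zero => simp only [thueMorseSum, mul_zero, range_zero, sum_empty]
  | succ N ih =>
    simp only [thueMorseSum, mul_add, mul_one, sum_range_succ] at ih ⊢
    rw [ih, thueMorse_two_mul, thueMorse_two_mul_add_one, neg_smul, smul_sub, ← sub_eq_add_neg,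
      add_sub_assoc]

end AddCommGroup

lemma thueMorseSum_const_mul {R : Type*} [Ring R] (c : R) (a : ℕ → R) (N : ℕ) :
    thueMorseSum (fun j => c * a j) N = c * thueMorseSum a N :=
  (map_thueMorseSum (AddMonoidHom.mulLeft c) a N).symm

lemma thueMorseSum_pow_two_pow_mul {R : Type*} [CommRing R] (z : R) (r N : ℕ) :
    thueMorseSum (z ^ ·) (2 ^ r * N) =
      (∏ i ∈ range r, (1 - z ^ 2 ^ i)) * thueMorseSum ((z ^ 2 ^ r) ^ ·) N := by
  induction r generalizing N with
  | zero => simp only [pow_zero, one_mul, range_zero, prod_empty, pow_one]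
  | succ r ih =>
    rw [pow_succ, mul_assoc, ih, thueMorseSum_two_mul, prod_range_succ, mul_assoc,
      ← thueMorseSum_const_mul (1 - z ^ 2 ^ r)]
    congr 2
    funext j
    ring

section Norm

variable {E : Type*} [SeminormedAddCommGroup E]

lemma norm_thueMorse_smul (n : ℕ) (x : E) : ‖thueMorse n • x‖ = ‖x‖ := by
  rcases neg_one_pow_eq_or ℤ (s n) with h | h
  · rw [thueMorse, h, one_smul]
  · rw [thueMorse, h, neg_one_smul, norm_neg]

lemma norm_thueMorseSum_add_sub_le {a : ℕ → E} {C : ℝ} (ha : ∀ j, ‖a j‖ ≤ C) (N k : ℕ) :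
    ‖thueMorseSum a (N + k) - thueMorseSum a N‖ ≤ k * C := by
  rw [thueMorseSum, thueMorseSum, sum_range_add, add_sub_cancel_left]
  refine (norm_sum_le_of_le _ fun i _ => (norm_thueMorse_smul _ _).trans_le (ha _)).trans_eq ?_
  rw [sum_const, card_range, nsmul_eq_mul]

end Norm

/-! ### Recursive inequalities along `N ↦ N / R` -/

section Recursion

variable {f : ℕ → ℝ} {R : ℕ} {m : ℝ}

lemma exists_forall_le_mul_rpow_of_le_mul_div (hR : 1 < R) (hm : 0 ≤ m)
    (hrec : ∀ N, f N ≤ (R : ℝ) ^ m * f (N / R)) :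
    ∃ C, ∀ N, 1 ≤ N → f N ≤ C * (N : ℝ) ^ m := by
  set C := ∑ i ∈ range R, |f i|
  have hC : 0 ≤ C := sum_nonneg fun i _ => abs_nonneg _
  refine ⟨C, fun N hN => ?_⟩
  induction N using Nat.strong_induction_on with
  | _ N ih =>
    rcases lt_or_ge N R with hNR | hNR
    · have hfC : |f N| ≤ C :=
        single_le_sum (f := fun i => |f i|) (fun i _ => abs_nonneg _) (mem_range.2 hNR)
      exact (le_abs_self _).trans <| hfC.trans <|
        le_mul_of_one_le_right hC <| Real.one_le_rpow (by exact_mod_cast hN) hm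
    · calc f N ≤ (R : ℝ) ^ m * f (N / R) := hrec N
        _ ≤ (R : ℝ) ^ m * (C * ((N / R : ℕ) : ℝ) ^ m) := by
            gcongr
            exact ih _ (Nat.div_lt_self hN hR) (Nat.div_pos hNR (by omega))
        _ = C * (((N / R * R : ℕ) : ℝ)) ^ m := by
            push_cast
            rw [Real.mul_rpow (by positivity) (by positivity)]
            ring
        _ ≤ C * (N : ℝ) ^ m := by
            gcongr
            exact Nat.div_mul_le_self N R

lemma exists_forall_mul_rpow_le_of_mul_div_le {N₀ : ℕ} {δ : ℝ} (hR : 1 < R) (hm : 0 ≤ m)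
    (hN₀ : 0 < N₀) (hδ : 0 < δ) (hbase : ∀ N, N₀ ≤ N → N < R * N₀ → δ ≤ f N)
    (hrec : ∀ N, (R : ℝ) ^ m * f (N / R) ≤ f N) :
    ∃ c, 0 < c ∧ ∀ N, N₀ ≤ N → c * (N : ℝ) ^ m ≤ f N := by
  have hR₀ : 0 < R := by omega
  set D : ℝ := ((R * N₀ : ℕ) : ℝ) ^ m with hD
  have hD₀ : 0 < D := by positivity
  refine ⟨δ / D, by positivity, fun N hN => ?_⟩
  -- Shifting `N` by one makes the bound stable under the rounding in `N / R`.
  suffices h : δ / D * ((N + 1 : ℕ) : ℝ) ^ m ≤ f N by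
    refine le_trans ?_ h
    gcongr
    omega
  induction N using Nat.strong_induction_on with
  | _ N ih =>
    rcases lt_or_ge N (R * N₀) with hNR | hNR
    · calc δ / D * ((N + 1 : ℕ) : ℝ) ^ m ≤ δ / D * D := by
            rw [hD]
            gcongr
            exact hNR
        _ = δ := div_mul_cancel₀ _ hD₀.ne'
        _ ≤ f N := hbase N hN hNR
    · have hNR' : N₀ ≤ N / R := (Nat.le_div_iff_mul_le hR₀).2 (by rwa [mul_comm])
      calc δ / D * ((N + 1 : ℕ) : ℝ) ^ m ≤ δ / D * ((R * (N / R + 1) : ℕ) : ℝ) ^ m := by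
            gcongr
            exact Nat.lt_mul_div_succ N hR₀
        _ = (R : ℝ) ^ m * (δ / D * ((N / R + 1 : ℕ) : ℝ) ^ m) := by
            rw [Nat.cast_mul, Real.mul_rpow (by positivity) (by positivity)]
            ring
        _ ≤ (R : ℝ) ^ m * f (N / R) := by
            gcongr
            exact ih _ (Nat.div_lt_self (by omega) hR) hNR'
        _ ≤ f N := hrec N

lemma isBigO_rpow_of_le_mul_div_add {B : ℝ} (hf : ∀ N, 0 ≤ f N) (hR : 1 < R) (hm : 0 < m)
    (hrec : ∀ N, f N ≤ (R : ℝ) ^ m * f (N / R) + B) :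
    f =O[atTop] fun N : ℕ => (N : ℝ) ^ m := by
  have hRm : 0 < (R : ℝ) ^ m - 1 := sub_pos.2 (Real.one_lt_rpow (by exact_mod_cast hR) hm)
  -- Adding the fixed point `K` of `x ↦ (x + B) / R ^ m` makes the recursion homogeneous.
  set K := B / ((R : ℝ) ^ m - 1)
  have hKB : ((R : ℝ) ^ m - 1) * K = B := mul_div_cancel₀ _ hRm.ne'
  obtain ⟨C, hC⟩ := exists_forall_le_mul_rpow_of_le_mul_div (f := fun N => f N + K) hR hm.le
    fun N => by linarith [hrec N]
  refine IsBigO.of_bound (C + |K|) ?_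
  filter_upwards [eventually_ge_atTop 1] with N hN
  have hN1 : 1 ≤ (N : ℝ) ^ m := Real.one_le_rpow (by exact_mod_cast hN) hm.le
  rw [Real.norm_of_nonneg (hf N), Real.norm_of_nonneg (by positivity)]
  linarith [hC N hN, neg_abs_le K, le_mul_of_one_le_right (abs_nonneg K) hN1]

lemma isLittleO_natCast_rpow_rpow {a : ℝ} (h : m < a) :
    (fun N : ℕ => (N : ℝ) ^ m) =o[atTop] fun N : ℕ => (N : ℝ) ^ a := by
  refine isLittleO_of_tendsto' ?_ (((tendsto_rpow_neg_atTop (sub_pos.2 h)).comp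
    tendsto_natCast_atTop_atTop).congr' ?_)
  all_goals
    filter_upwards [eventually_gt_atTop 0] with N hN
    have hN : (0 : ℝ) < N := by exact_mod_cast hN
  · exact fun h0 => absurd h0 (by positivity)
  · rw [Function.comp_apply, neg_sub, Real.rpow_sub hN]

lemma isLittleO_rpow_of_le_mul_div_add {q a B : ℝ} (hf : ∀ N, 0 ≤ f N) (hR : 1 < R)
    (ha : 0 < a) (hq : q < (R : ℝ) ^ a) (hrec : ∀ N, f N ≤ q * f (N / R) + B) :
    f =o[atTop] fun N : ℕ => (N : ℝ) ^ a := by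
  have hR1 : (1 : ℝ) < R := by exact_mod_cast hR
  obtain ⟨ρ, hρ, hρa⟩ := exists_between (max_lt hq (Real.one_lt_rpow hR1 ha))
  obtain ⟨hqρ, h1ρ⟩ := max_lt_iff.1 hρ
  have hρ0 : 0 < ρ := by linarith
  refine (isBigO_rpow_of_le_mul_div_add (m := Real.logb R ρ) (B := B) hf hR
    (Real.logb_pos hR1 h1ρ) fun N => ?_).trans_isLittleO
    (isLittleO_natCast_rpow_rpow ((Real.logb_lt_iff_lt_rpow hR1 hρ0).2 hρa))
  rw [Real.rpow_logb (by linarith) hR1.ne' hρ0]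
  linarith [hrec N, mul_le_mul_of_nonneg_right hqρ.le (hf (N / R))]

end Recursion

/-! ### Thue–Morse exponential sums at roots of unity -/

lemma cube_mul_four_sub_lt {x : ℝ} (hx : x ≠ 3) : x ^ 3 * (4 - x) < 27 := by
  have hfactor : 27 - x ^ 3 * (4 - x) = (x - 3) ^ 2 * ((x + 1) ^ 2 + 2) := by ring
  have := sub_ne_zero.2 hx
  rw [← sub_pos, hfactor]
  positivity

lemma cube_mul_four_sub_le (x : ℝ) : x ^ 3 * (4 - x) ≤ 27 := by
  rcases eq_or_ne x 3 with rfl | hx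
  · norm_num
  · exact (cube_mul_four_sub_lt hx).le

lemma prod_range_succ_eq_prod_range_of_periodic {R : Type*} [CommRing R] [IsDomain R]
    {v : ℕ → R} {r : ℕ} (h0 : v 0 ≠ 0) (hr : v r = v 0) :
    ∏ i ∈ range r, v (i + 1) = ∏ i ∈ range r, v i := by
  have h := (prod_range_succ' v r).symm.trans (prod_range_succ v r)
  rw [hr] at h
  exact mul_right_cancel₀ h0 h

lemma prod_lt_three_pow_of_logistic_orbit {v : ℕ → ℝ} {r : ℕ} (hr : 0 < r) (hv : ∀ i, 0 ≤ v i)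
    (hstep : ∀ i, v (i + 1) = v i * (4 - v i)) (hper : v r = v 0) (h3 : v 0 ≠ 3) :
    ∏ i ∈ range r, v i < 3 ^ r := by
  rcases eq_or_ne (v 0) 0 with h0 | h0
  · rw [prod_eq_zero (mem_range.2 hr) h0]
    positivity
  -- Trading one factor `v i` for `v (i + 1)`, whose product over the cycle is the same.
  have hcube : (∏ i ∈ range r, v i) ^ 3 = ∏ i ∈ range r, v i ^ 3 * (4 - v i) := by
    rw [pow_succ]
    nth_rewrite 2 [← prod_range_succ_eq_prod_range_of_periodic h0 hper]
    rw [← prod_pow, ← prod_mul_distrib]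
    exact prod_congr rfl fun i _ => by rw [hstep]; ring
  have hnonneg : ∀ i, 0 ≤ v i ^ 3 * (4 - v i) := fun i => by
    have := mul_nonneg (sq_nonneg (v i)) (hv (i + 1))
    rw [hstep] at this
    linarith
  refine lt_of_pow_lt_pow_left₀ 3 (by positivity) ?_
  obtain ⟨n, rfl⟩ := Nat.exists_eq_add_of_lt hr
  rw [zero_add] at hcube ⊢
  calc (∏ i ∈ range (n + 1), v i) ^ 3
      = (∏ i ∈ range n, v (i + 1) ^ 3 * (4 - v (i + 1))) * (v 0 ^ 3 * (4 - v 0)) := by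
        rw [hcube, prod_range_succ']
    _ ≤ (∏ _i ∈ range n, 27) * (v 0 ^ 3 * (4 - v 0)) :=
        mul_le_mul_of_nonneg_right
          (prod_le_prod (fun i _ => hnonneg _) fun i _ => cube_mul_four_sub_le _) (hnonneg 0)
    _ < (∏ _i ∈ range n, 27) * 27 :=
        mul_lt_mul_of_pos_left (cube_mul_four_sub_lt h3) (by positivity)
    _ = (3 ^ (n + 1)) ^ 3 := by
        rw [prod_const, card_range, ← pow_succ, ← pow_mul, mul_comm, pow_mul]
        norm_num

lemma sq_norm_one_sub_sq {z : ℂ} (hz : ‖z‖ = 1) :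
    ‖1 - z ^ 2‖ ^ 2 = ‖1 - z‖ ^ 2 * (4 - ‖1 - z‖ ^ 2) := by
  have hfactor : (1 : ℂ) - z ^ 2 = (1 - z) * (1 + z) := by ring
  have hpar := parallelogram_law_with_norm ℝ (1 : ℂ) z
  simp only [norm_one, hz] at hpar
  rw [hfactor, norm_mul, mul_pow]
  congr 1
  linarith

lemma sq_add_self_add_one_eq_zero_of_sq_norm_one_sub {z : ℂ} (hz : ‖z‖ = 1)
    (h : ‖1 - z‖ ^ 2 = 3) : z ^ 2 + z + 1 = 0 := by
  rw [← Complex.normSq_eq_norm_sq, Complex.normSq_sub, Complex.normSq_eq_norm_sq z, hz] at h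
  simp only [map_one, one_pow, one_mul, Complex.conj_re] at h
  have hconj : z * (starRingEnd ℂ) z = 1 := by
    rw [Complex.mul_conj, Complex.normSq_eq_norm_sq, hz, one_pow, Complex.ofReal_one]
  have hre : z + (starRingEnd ℂ) z = -1 := by
    rw [Complex.add_conj, ← Complex.ofReal_one, ← Complex.ofReal_neg]
    congr 1
    linarith
  linear_combination z * hre - hconj

lemma sq_norm_prod_one_sub_lt {z : ℂ} (hz : ‖z‖ = 1) (hz3 : z ^ 2 + z + 1 ≠ 0) {r : ℕ}
    (hr : 0 < r) (hper : z ^ 2 ^ r = z) :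
    ‖∏ i ∈ range r, (1 - z ^ 2 ^ i)‖ ^ 2 < 3 ^ r := by
  rw [norm_prod, ← prod_pow]
  refine prod_lt_three_pow_of_logistic_orbit hr (fun i => sq_nonneg _) (fun i => ?_) ?_ fun h => ?_
  · rw [pow_succ 2 i, pow_mul, sq_norm_one_sub_sq (by rw [norm_pow, hz, one_pow])]
  · rw [hper, pow_zero, pow_one]
  · rw [pow_zero, pow_one] at h
    exact hz3 (sq_add_self_add_one_eq_zero_of_sq_norm_one_sub hz h)

lemma thueMorseSum_pow_isLittleO {z : ℂ} {Q : ℕ} (hQ : Odd Q) (hzQ : z ^ Q = 1)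
    (hz3 : z ^ 2 + z + 1 ≠ 0) :
    thueMorseSum (z ^ ·) =o[atTop] fun N : ℕ => (N : ℝ) ^ newmanExponent := by
  have hz : ‖z‖ = 1 := Complex.norm_eq_one_of_pow_eq_one hzQ hQ.pos.ne'
  set r := Nat.totient Q
  have hr : 0 < r := Nat.totient_pos.2 hQ.pos
  have hper : z ^ 2 ^ r = z :=
    (pow_eq_pow_of_modEq (Nat.ModEq.pow_totient (Nat.coprime_two_left.2 hQ)) hzQ).trans (pow_one z)
  set q := ‖∏ i ∈ range r, (1 - z ^ 2 ^ i)‖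
  have hq : q < ((2 ^ r : ℕ) : ℝ) ^ newmanExponent := by
    refine lt_of_pow_lt_pow_left₀ 2 (by positivity) ?_
    rw [two_pow_rpow_newmanExponent_sq]
    exact sq_norm_prod_one_sub_lt hz hz3 hr hper
  refine IsLittleO.of_norm_left (isLittleO_rpow_of_le_mul_div_add (R := 2 ^ r) (B := (2 ^ r : ℕ))
    (fun _ => norm_nonneg _) (Nat.one_lt_two_pow hr.ne') newmanExponent_pos hq fun N => ?_)
  have hblock : ‖thueMorseSum (z ^ ·) (2 ^ r * (N / 2 ^ r))‖ =
      q * ‖thueMorseSum (z ^ ·) (N / 2 ^ r)‖ := by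
    rw [thueMorseSum_pow_two_pow_mul, hper, norm_mul]
  have htail := norm_thueMorseSum_add_sub_le (a := (z ^ ·)) (C := 1)
    (fun j => by rw [norm_pow, hz, one_pow]) (2 ^ r * (N / 2 ^ r)) (N % 2 ^ r)
  rw [Nat.div_add_mod, mul_one] at htail
  have hmod : ((N % 2 ^ r : ℕ) : ℝ) ≤ (2 ^ r : ℕ) := by
    exact_mod_cast (Nat.mod_lt _ (by positivity)).le
  linarith [norm_le_norm_add_norm_sub' (thueMorseSum (z ^ ·) N)
    (thueMorseSum (z ^ ·) (2 ^ r * (N / 2 ^ r)))]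

/-! ### Newman's sum -/

/-- The mean-zero weight on residues mod `3` that is invariant under `x ↦ -1 - x`. -/
def newmanWeight (x : ZMod 3) : ℝ := if x = 1 then -2 else 1

/-- The Thue–Morse sum of `newmanWeight`. It is a linear combination of the Thue–Morse exponential
sums at the two primitive cube roots of unity, which are those of exact order `N ^ (log₄ 3)`. -/
def newmanSum : ℕ → ℝ := thueMorseSum fun j => newmanWeight j

lemma abs_newmanWeight_le (x : ZMod 3) : |newmanWeight x| ≤ 2 := by
  unfold newmanWeight
  split_ifs <;> norm_num

lemma newmanWeight_sum_four_mul (x : ZMod 3) :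
    newmanWeight (4 * x) - newmanWeight (4 * x + 1)
      - (newmanWeight (4 * x + 2) - newmanWeight (4 * x + 3)) = 3 * newmanWeight x := by
  have h4 : (4 : ZMod 3) = 1 := rfl
  have h3 : (3 : ZMod 3) = 0 := rfl
  rw [h4, h3, one_mul, add_zero]
  unfold newmanWeight
  have h : ∀ x : ZMod 3, x = 0 ∨ x = 1 ∨ x = 2 := by decide
  rcases h x with rfl | rfl | rfl <;> simp +decide <;> norm_num

lemma newmanSum_four_mul (N : ℕ) : newmanSum (4 * N) = 3 * newmanSum N := by
  rw [newmanSum, show 4 * N = 2 * (2 * N) by ring, thueMorseSum_two_mul, thueMorseSum_two_mul,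
    ← thueMorseSum_const_mul]
  congr 1
  funext j
  rw [← newmanWeight_sum_four_mul]
  push_cast
  ring_nf

lemma abs_newmanSum_sub_three_mul_le (N : ℕ) : |newmanSum N - 3 * newmanSum (N / 4)| ≤ 6 := by
  have h : ‖newmanSum (4 * (N / 4) + N % 4) - newmanSum (4 * (N / 4))‖ ≤ (N % 4 : ℕ) * 2 :=
    norm_thueMorseSum_add_sub_le (fun j => abs_newmanWeight_le j) _ _
  rw [Nat.div_add_mod, newmanSum_four_mul, Real.norm_eq_abs] at h
  have hmod : ((N % 4 : ℕ) : ℝ) ≤ 3 := by exact_mod_cast Nat.le_of_lt_succ (N.mod_lt four_pos)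
  linarith

lemma four_le_newmanSum {N : ℕ} (h5 : 5 ≤ N) (h20 : N < 20) : 4 ≤ newmanSum N := by
  interval_cases N <;>
    simp +decide [newmanSum, thueMorseSum, sum_range_succ, thueMorse, s, newmanWeight] <;> norm_num

lemma newmanSum_isTheta : newmanSum =Θ[atTop] fun N : ℕ => (N : ℝ) ^ newmanExponent := by
  have h4 : ((4 : ℕ) : ℝ) ^ newmanExponent = 3 := four_rpow_newmanExponent
  constructor
  · refine IsBigO.of_abs_left (isBigO_rpow_of_le_mul_div_add (R := 4) (B := 6)
      (fun _ => abs_nonneg _) (by norm_num) newmanExponent_pos fun N => ?_)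
    have h := abs_sub_abs_le_abs_sub (newmanSum N) (3 * newmanSum (N / 4))
    rw [abs_mul, abs_of_pos (three_pos (α := ℝ))] at h
    rw [h4]
    linarith [abs_newmanSum_sub_three_mul_le N]
  · obtain ⟨c, hc, hlow⟩ := exists_forall_mul_rpow_le_of_mul_div_le
      (f := fun N => newmanSum N - 3) (R := 4) (N₀ := 5) (δ := 1) (by norm_num)
      newmanExponent_pos.le (by norm_num) one_pos
      (fun N h5 h20 => by linarith [four_le_newmanSum h5 h20])
      fun N => by rw [h4]; linarith [(abs_le.1 (abs_newmanSum_sub_three_mul_le N)).1]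
    refine IsBigO.of_bound c⁻¹ ?_
    filter_upwards [eventually_ge_atTop 5] with N hN
    rw [Real.norm_of_nonneg (by positivity), Real.norm_eq_abs, ← div_eq_inv_mul,
      le_div_iff₀' hc]
    linarith [hlow N hN, le_abs_self (newmanSum N)]

/-! ### Periodic weights -/

lemma sum_zmod_three {M : Type*} [AddCommMonoid M] (f : ZMod 3 → M) :
    ∑ r, f r = f 0 + f 1 + f 2 :=
  Fin.sum_univ_three f

section Periodic

variable {Q : ℕ} [NeZero Q]

lemma thueMorseSum_eq_sum_dft (f : ZMod Q → ℂ) (N : ℕ) :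
    thueMorseSum (fun n => f n) N =
      (Q : ℂ)⁻¹ * ∑ l : ZMod Q, ZMod.dft f l * thueMorseSum (ZMod.stdAddChar l ^ ·) N := by
  have hf : ∀ n : ℕ, f n =
      (Q : ℂ)⁻¹ * ∑ l : ZMod Q, ZMod.dft f l * ZMod.stdAddChar l ^ n := fun n => by
    conv_lhs => rw [← ZMod.dft.symm_apply_apply f]
    rw [ZMod.invDFT_apply, smul_eq_mul]
    congr 1
    refine sum_congr rfl fun l _ => ?_
    rw [smul_eq_mul, ← AddChar.map_nsmul_eq_pow, nsmul_eq_mul, mul_comm l, mul_comm]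
  simp only [hf, thueMorseSum_const_mul, thueMorseSum_sum]

variable (h3 : 3 ∣ Q)

lemma val_castHom_three (x : ZMod Q) : (ZMod.castHom h3 (ZMod 3) x).val = x.val % 3 := by
  rw [← ZMod.val_natCast, ← map_natCast (ZMod.castHom h3 (ZMod 3)), ZMod.natCast_zmod_val]

lemma dft_eq_zero_of_sum_fiber_eq {f : ZMod Q → ℂ} {A : ℂ}
    (hA : ∀ r, ∑ x with ZMod.castHom h3 (ZMod 3) x = r, f x = A) {l : ZMod Q}
    (hl : (ZMod.stdAddChar l : ℂ) ^ 2 + ZMod.stdAddChar l + 1 = 0) : ZMod.dft f l = 0 := by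
  set z : ℂ := ZMod.stdAddChar l
  have hz3 : z ^ 3 = 1 := by linear_combination (z - 1) * hl
  set w : ℂ := z ^ 2 with hw
  have hw3 : w ^ 3 = 1 := by rw [hw, ← pow_mul, mul_comm, pow_mul, hz3, one_pow]
  have hw_sum : 1 + w + w ^ 2 = 0 := by rw [hw]; linear_combination hl + z * hz3
  have hz_inv : ZMod.stdAddChar (-l) = w := by
    rw [AddChar.map_neg_eq_inv, inv_eq_of_mul_eq_one_right]
    rw [hw, ← hz3]
    ring
  have hchar (x : ZMod Q) :
      ZMod.stdAddChar (-(x * l)) = w ^ (ZMod.castHom h3 (ZMod 3) x).val := by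
    rw [val_castHom_three, ← pow_eq_pow_mod _ hw3, ← hz_inv, ← AddChar.map_nsmul_eq_pow,
      nsmul_eq_mul, ZMod.natCast_zmod_val, mul_neg]
  calc ZMod.dft f l = ∑ x, w ^ (ZMod.castHom h3 (ZMod 3) x).val * f x := by
        simp only [ZMod.dft_apply, hchar, smul_eq_mul]
    _ = ∑ r : ZMod 3, w ^ r.val * A := by
        rw [← sum_fiberwise univ (ZMod.castHom h3 (ZMod 3))]
        refine sum_congr rfl fun r _ => ?_
        rw [← hA r, mul_sum]
        exact sum_congr rfl fun x hx => by rw [(mem_filter.1 hx).2]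
    _ = (1 + w + w ^ 2) * A := by
        rw [← sum_mul, sum_zmod_three, ZMod.val_zero, ZMod.val_one, pow_zero, pow_one]
        rfl
    _ = 0 := by rw [hw_sum, zero_mul]

lemma thueMorseSum_isLittleO_of_sum_fiber_eq (hQ : Odd Q) {f : ZMod Q → ℝ} {A : ℝ}
    (hA : ∀ r, ∑ x with ZMod.castHom h3 (ZMod 3) x = r, f x = A) :
    thueMorseSum (fun n => f n) =o[atTop] fun N : ℕ => (N : ℝ) ^ newmanExponent := by
  have hcomplex : ∀ N, ‖thueMorseSum (fun n => (f n : ℂ)) N‖ = ‖thueMorseSum (fun n => f n) N‖ :=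
    fun N => by
      rw [← Complex.norm_real]
      exact congrArg _ (map_thueMorseSum Complex.ofRealHom.toAddMonoidHom _ N).symm
  have hA' : ∀ r, ∑ x with ZMod.castHom h3 (ZMod 3) x = r, (f x : ℂ) = A := fun r => by
    rw [← hA r, Complex.ofReal_sum]
  refine IsLittleO.of_norm_left (IsLittleO.congr_left (IsLittleO.norm_left ?_) hcomplex)
  refine IsLittleO.congr_left (IsLittleO.const_mul_left (IsLittleO.fun_sum fun l _ => ?_) _)
    fun N => (thueMorseSum_eq_sum_dft (fun x => (f x : ℂ)) N).symm
  by_cases hl : (ZMod.stdAddChar l : ℂ) ^ 2 + ZMod.stdAddChar l + 1 = 0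
  · simp only [dft_eq_zero_of_sum_fiber_eq h3 hA' hl, zero_mul]
    exact isLittleO_zero _ _
  · refine (thueMorseSum_pow_isLittleO hQ ?_ hl).const_mul_left _
    rw [← AddChar.map_nsmul_eq_pow, nsmul_eq_mul, ZMod.natCast_self, zero_mul,
      AddChar.map_zero_eq_one]

lemma three_mul_card_fiber_castHom (r : ZMod 3) :
    3 * #{x | ZMod.castHom h3 (ZMod 3) x = r} = Q := by
  have hrange : ∀ r, r ∈ Set.range (ZMod.castHom h3 (ZMod 3)) := ZMod.castHom_surjective h3
  have hcard := card_eq_sum_card_fiberwise (f := ZMod.castHom h3 (ZMod 3)) (s := univ) (t := univ)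
    fun _ _ => mem_univ _
  rw [card_univ, ZMod.card, sum_congr rfl fun q _ =>
    AddMonoidHom.card_fiber_eq_of_mem_range (ZMod.castHom h3 (ZMod 3)) (hrange q) (hrange r),
    sum_const, card_univ, ZMod.card, smul_eq_mul] at hcard
  exact hcard.symm

lemma sum_fiber_two_eq_sum_fiber_zero {M : Type*} [AddCommMonoid M] {f : ZMod Q → M}
    (hsymm : ∀ x, f (-1 - x) = f x) :
    ∑ x with ZMod.castHom h3 (ZMod 3) x = 2, f x =
      ∑ x with ZMod.castHom h3 (ZMod 3) x = 0, f x := by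
  refine sum_equiv (Equiv.subLeft (-1)) (fun x => ?_) fun x _ => (hsymm x).symm
  simp only [mem_filter, mem_univ, true_and, Equiv.subLeft_apply, map_sub, map_neg, map_one]
  generalize ZMod.castHom h3 (ZMod 3) x = r
  revert r
  decide

lemma thueMorseSum_sub_newmanSum_isLittleO (hQ : Odd Q) {f : ZMod Q → ℝ}
    (hsymm : ∀ x, f (-1 - x) = f x) (hzero : ∀ x, ZMod.castHom h3 (ZMod 3) x = 1 → f x = 0) :
    (fun N => thueMorseSum (fun n => f n) N - (∑ x, f x) / (2 * Q) * newmanSum N)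
      =o[atTop] fun N : ℕ => (N : ℝ) ^ newmanExponent := by
  set φ := ZMod.castHom h3 (ZMod 3)
  set a := ∑ x with φ x = 0, f x with ha
  have hf2 : ∑ x with φ x = 2, f x = a := sum_fiber_two_eq_sum_fiber_zero h3 hsymm
  have hf1 : ∑ x with φ x = 1, f x = 0 := sum_eq_zero fun x hx => hzero x (mem_filter.1 hx).2
  have hfsum : ∑ x, f x = 2 * a := by
    rw [← sum_fiberwise univ φ, sum_zmod_three, hf1, hf2, ← ha]
    ring
  set c := (∑ x, f x) / (2 * Q) with hc
  have hcQ : c * Q = a := by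
    have : (Q : ℝ) ≠ 0 := NeZero.ne _
    rw [hc, hfsum]
    field_simp
  have hweight : ∀ r, ∑ x with φ x = r, newmanWeight (φ x) = Q / 3 * newmanWeight r := fun r => by
    have hcard : (3 : ℝ) * #{x | φ x = r} = Q := by
      exact_mod_cast three_mul_card_fiber_castHom h3 r
    rw [sum_congr rfl fun x hx => by rw [(mem_filter.1 hx).2], sum_const, nsmul_eq_mul, ← hcard]
    ring
  have hfiber : ∀ r, ∑ x with φ x = r, (f x - c * newmanWeight (φ x)) = 2 / 3 * a := fun r => by
    rw [sum_sub_distrib, ← mul_sum, hweight]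
    have hr : r = 0 ∨ r = 1 ∨ r = 2 := by revert r; decide
    rcases hr with rfl | rfl | rfl
    · rw [← ha, newmanWeight, if_neg (by decide)]
      linear_combination -1 / 3 * hcQ
    · rw [hf1, newmanWeight, if_pos rfl]
      linear_combination 2 / 3 * hcQ
    · rw [hf2, newmanWeight, if_neg (by decide)]
      linear_combination -1 / 3 * hcQ
  refine (thueMorseSum_isLittleO_of_sum_fiber_eq h3 hQ hfiber).congr_left fun N => ?_
  rw [thueMorseSum_sub, thueMorseSum_const_mul, newmanSum]
  simp only [φ, map_natCast]

end Periodic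

/-! ### Least prime factors -/

/-- `p` divides `m` and no smaller odd prime does. For odd `m : ℕ` and `p` prime this says that `p`
is the least prime factor of `m`; in a quotient of `ℤ` it is the reduction of that property. -/
def IsLeastOddPrimeDivisor {R : Type*} [CommSemiring R] (p : ℕ) (m : R) : Prop :=
  (p : R) ∣ m ∧ ∀ q : ℕ, q.Prime → q ≠ 2 → q < p → ¬(q : R) ∣ m

lemma isLeastOddPrimeDivisor_neg {R : Type*} [CommRing R] {p : ℕ} {m : R} :
    IsLeastOddPrimeDivisor p (-m) ↔ IsLeastOddPrimeDivisor p m := by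
  simp only [IsLeastOddPrimeDivisor, dvd_neg]

lemma minFac_eq_iff_isLeastOddPrimeDivisor {p m : ℕ} (hp : p.Prime) (hm : Odd m) :
    m.minFac = p ↔ IsLeastOddPrimeDivisor p m := by
  constructor
  · rintro rfl
    exact ⟨m.minFac_dvd, fun q hq _ hlt hdvd =>
      hlt.not_ge (Nat.minFac_le_of_dvd hq.two_le hdvd)⟩
  · rintro ⟨hdvd, hmin⟩
    refine (Nat.minFac_le_of_dvd hp.two_le hdvd).antisymm (not_lt.1 fun hlt => ?_)
    have hm1 : m ≠ 1 := fun h => hp.ne_one (Nat.dvd_one.1 (h ▸ hdvd))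
    exact hmin _ (Nat.minFac_prime hm1)
      (fun h2 => hm.not_two_dvd_nat ((Nat.minFac_eq_two_iff m).1 h2)) hlt m.minFac_dvd

/-- The product of the odd primes up to `n`. -/
def oddPrimorial (n : ℕ) : ℕ := ∏ q ∈ Icc 3 n with q.Prime, q

lemma odd_oddPrimorial (n : ℕ) : Odd (oddPrimorial n) :=
  prod_induction _ Odd (fun _ _ => Odd.mul) odd_one fun q hq => by
    obtain ⟨hq, hprime⟩ := mem_filter.1 hq
    exact hprime.odd_of_ne_two (by have := (mem_Icc.1 hq).1; omega)

instance neZero_oddPrimorial (n : ℕ) : NeZero (oddPrimorial n) := ⟨(odd_oddPrimorial n).pos.ne'⟩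

lemma dvd_oddPrimorial {q n : ℕ} (hq : q.Prime) (hq2 : q ≠ 2) (hqn : q ≤ n) :
    q ∣ oddPrimorial n :=
  dvd_prod_of_mem (fun q => q)
    (mem_filter.2 ⟨mem_Icc.2 ⟨by have := hq.two_le; omega, hqn⟩, hq⟩)

lemma natCast_dvd_natCast_zmod_iff {q Q m : ℕ} (hq : q ∣ Q) :
    (q : ZMod Q) ∣ (m : ZMod Q) ↔ q ∣ m := by
  refine ⟨fun h => ?_, Nat.cast_dvd_cast⟩
  have := map_dvd (ZMod.castHom hq (ZMod q)) h
  rwa [map_natCast, map_natCast, ZMod.natCast_self, zero_dvd_iff, ZMod.natCast_eq_zero_iff] at this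

lemma isLeastOddPrimeDivisor_natCast_iff {p m : ℕ} (hp : p.Prime) (hp2 : p ≠ 2) :
    IsLeastOddPrimeDivisor p (m : ZMod (oddPrimorial p)) ↔ IsLeastOddPrimeDivisor p m := by
  have hdvd : ∀ q : ℕ, q.Prime → q ≠ 2 → q ≤ p → ((q : ZMod (oddPrimorial p)) ∣ m ↔ q ∣ m) :=
    fun q hq hq2 hqp => natCast_dvd_natCast_zmod_iff (dvd_oddPrimorial hq hq2 hqp)
  refine and_congr (hdvd p hp hp2 le_rfl) (forall₄_congr fun q hq hq2 hqp => ?_)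
  rw [hdvd q hq hq2 hqp.le, Nat.cast_id]

open Classical in
/-- The indicator function, read modulo `oddPrimorial p`, of the `k` for which `2 * k + 1` has
least prime factor `p`. -/
def minFacIndicator (p : ℕ) (x : ZMod (oddPrimorial p)) : ℝ :=
  if IsLeastOddPrimeDivisor p (2 * x + 1) then 1 else 0

lemma minFacIndicator_natCast {p : ℕ} (hp : p.Prime) (hp2 : p ≠ 2) (k : ℕ) :
    minFacIndicator p k = if (2 * k + 1).minFac = p then 1 else 0 := by
  classical
  refine if_congr ?_ rfl rfl
  rw [minFac_eq_iff_isLeastOddPrimeDivisor hp (odd_two_mul_add_one k),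
    ← isLeastOddPrimeDivisor_natCast_iff hp hp2]
  push_cast
  rfl

lemma minFacIndicator_neg_one_sub (p : ℕ) (x : ZMod (oddPrimorial p)) :
    minFacIndicator p (-1 - x) = minFacIndicator p x := by
  classical
  refine if_congr ?_ rfl rfl
  rw [← isLeastOddPrimeDivisor_neg, show -(2 * (-1 - x) + 1) = 2 * x + 1 by ring]

lemma minFacIndicator_eq_zero {p : ℕ} (hp : p.Prime) (hp5 : 5 ≤ p) (h3 : 3 ∣ oddPrimorial p)
    {x : ZMod (oddPrimorial p)} (hx : ZMod.castHom h3 (ZMod 3) x = 1) :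
    minFacIndicator p x = 0 := by
  have hval : x.val % 3 = 1 := by rw [← val_castHom_three h3, hx]; rfl
  rw [← ZMod.natCast_zmod_val x, minFacIndicator_natCast hp (by omega), if_neg]
  intro hmin
  have := Nat.minFac_le_of_dvd (n := 2 * x.val + 1) (m := 3) (by norm_num) (by omega)
  omega

lemma sum_minFacIndicator_pos {p : ℕ} (hp : p.Prime) (hp2 : p ≠ 2) :
    0 < ∑ x, minFacIndicator p x := by
  refine sum_pos' (fun x _ => ?_) ⟨((p / 2 : ℕ) : ZMod (oddPrimorial p)), mem_univ _, ?_⟩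
  · unfold minFacIndicator
    split_ifs <;> norm_num
  · rw [minFacIndicator_natCast hp hp2, Nat.two_mul_div_two_add_one_of_odd (hp.odd_of_ne_two hp2),
      if_pos hp.minFac_eq]
    exact one_pos

lemma thueMorseSum_minFacIndicator_isTheta {p : ℕ} (hp : p.Prime) (hp5 : 5 ≤ p) :
    thueMorseSum (fun k => minFacIndicator p k) =Θ[atTop]
      fun N : ℕ => (N : ℝ) ^ newmanExponent := by
  have h3 : 3 ∣ oddPrimorial p := dvd_oddPrimorial Nat.prime_three (by norm_num) (by omega)
  have hQ := odd_oddPrimorial p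
  set c := (∑ x, minFacIndicator p x) / (2 * oddPrimorial p)
  have hc0 : c ≠ 0 := by
    have : (0 : ℝ) < oddPrimorial p := by exact_mod_cast hQ.pos
    have := sum_minFacIndicator_pos hp (by omega : p ≠ 2)
    positivity
  have hmain : (fun N => c * newmanSum N) =Θ[atTop] fun N : ℕ => (N : ℝ) ^ newmanExponent :=
    (isTheta_const_mul_left hc0).2 newmanSum_isTheta
  have herror := thueMorseSum_sub_newmanSum_isLittleO h3 hQ (minFacIndicator_neg_one_sub p)
    fun _ hx => minFacIndicator_eq_zero hp hp5 h3 hx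
  have hequiv : thueMorseSum (fun k => minFacIndicator p k) ~[atTop] fun N => c * newmanSum N :=
    herror.trans_isTheta hmain.symm
  exact hequiv.isTheta.trans hmain

lemma V_eq_image {p : ℕ} (hp2 : p ≠ 2) (n : ℕ) :
    V p n = image (2 * · + 1) {k ∈ range ((n + 1) / 2) | (2 * k + 1).minFac = p} := by
  ext j
  simp only [V, mem_filter, mem_Icc, mem_image, mem_range]
  constructor
  · rintro ⟨hj, rfl⟩
    have hodd : Odd j := by
      rwa [Ne, Nat.minFac_eq_two_iff, ← even_iff_two_dvd, Nat.not_even_iff_odd] at hp2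
    obtain ⟨k, rfl⟩ := hodd
    exact ⟨k, ⟨by omega, rfl⟩, rfl⟩
  · rintro ⟨k, ⟨hk, hmin⟩, rfl⟩
    exact ⟨by omega, hmin⟩

lemma neg_sum_V_eq_thueMorseSum {p : ℕ} (hp : p.Prime) (hp2 : p ≠ 2) (n : ℕ) :
    -(∑ j ∈ V p n, (-1 : ℝ) ^ s j) =
      thueMorseSum (fun k => minFacIndicator p k) ((n + 1) / 2) := by
  rw [V_eq_image hp2, sum_image fun _ _ _ _ h => by simpa using h, ← sum_neg_distrib, sum_filter,
    thueMorseSum]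
  refine sum_congr rfl fun k _ => ?_
  rw [minFacIndicator_natCast hp hp2, s_two_mul_add_one, pow_succ, mul_neg_one, neg_neg, thueMorse]
  split_ifs <;> simp

/-! ### Growth exponents -/

lemma natCast_add_one_div_two_rpow_isTheta {a : ℝ} :
    (fun n : ℕ => (((n + 1) / 2 : ℕ) : ℝ) ^ a) =Θ[atTop] fun n : ℕ => (n : ℝ) ^ a := by
  have hlin : (fun n : ℕ => (((n + 1) / 2 : ℕ) : ℝ)) =Θ[atTop] fun n : ℕ => (n : ℝ) := by
    refine ⟨IsBigO.of_bound 1 (.of_forall fun n => ?_), IsBigO.of_bound 2 (.of_forall fun n => ?_)⟩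
    · rw [Real.norm_natCast, Real.norm_natCast]
      exact_mod_cast (by omega : (n + 1) / 2 ≤ 1 * n)
    · rw [Real.norm_natCast, Real.norm_natCast]
      exact_mod_cast (by omega : n ≤ 2 * ((n + 1) / 2))
  exact hlin.rpow (.of_forall fun n => Nat.cast_nonneg _) (.of_forall fun n => Nat.cast_nonneg _)

lemma tendsto_log_div_log_of_isTheta_rpow {f : ℕ → ℝ} {e : ℝ}
    (hf : f =Θ[atTop] fun n : ℕ => (n : ℝ) ^ e) :
    Tendsto (fun n : ℕ => Real.log (f n) / Real.log n) atTop (𝓝 e) := by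
  have hlim (d : ℝ) : Tendsto (fun n : ℕ => Real.log d / Real.log n + e) atTop (𝓝 e) := by
    simpa using ((Real.tendsto_log_atTop.comp tendsto_natCast_atTop_atTop).const_div_atTop
      (Real.log d)).add_const e
  have hsplit {d : ℝ} (hd : 0 < d) {n : ℕ} (hn : 1 < n) :
      Real.log (d * (n : ℝ) ^ e) / Real.log n = Real.log d / Real.log n + e := by
    have hn1 : (1 : ℝ) < n := by exact_mod_cast hn
    have := (Real.log_pos hn1).ne'
    rw [Real.log_mul hd.ne' (by positivity), Real.log_rpow (by linarith)]
    field_simp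
  obtain ⟨C, hC, hup⟩ := hf.isBigO.exists_pos
  obtain ⟨c, hc, hlow⟩ := hf.isBigO_symm.exists_pos
  refine tendsto_of_tendsto_of_tendsto_of_le_of_le' (hlim c⁻¹) (hlim C) ?_ ?_
  all_goals
    filter_upwards [hup.bound, hlow.bound, eventually_gt_atTop 1] with n hu hl hn
    have hn1 : (1 : ℝ) < n := by exact_mod_cast hn
    have hlog := (Real.log_pos hn1).le
    have hpow : (0 : ℝ) < (n : ℝ) ^ e := by positivity
    rw [Real.norm_of_nonneg hpow.le, Real.norm_eq_abs] at hu hl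
    have hfpos : 0 < |f n| := pos_of_mul_pos_right (hpow.trans_le hl) hc.le
    rw [← Real.log_abs (f n), ← hsplit (by positivity) hn]
    gcongr
  rwa [inv_mul_le_iff₀ hc]

theorem stmt_15 (p : ℕ) (hp : p.Prime) (hp5 : 5 ≤ p) :
    Tendsto (fun n : ℕ => Real.log (-(∑ j ∈ V p n, (-1 : ℝ) ^ (s j))) / Real.log n)
      atTop (𝓝 (Real.log 3 / Real.log 4)) := by
  have htheta := thueMorseSum_minFacIndicator_isTheta hp hp5
  have hhalf : Tendsto (fun n : ℕ => (n + 1) / 2) atTop atTop :=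
    (Nat.tendsto_div_const_atTop two_ne_zero).comp (tendsto_add_atTop_nat 1)
  simp only [neg_sum_V_eq_thueMorseSum hp (by omega : p ≠ 2)]
  refine tendsto_log_div_log_of_isTheta_rpow (IsTheta.trans ?_ natCast_add_one_div_two_rpow_isTheta)
  exact ⟨htheta.1.comp_tendsto hhalf, htheta.2.comp_tendsto hhalf⟩
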